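/- For all n ≥ 7, the graceful chromatic number of the diagonal ladder DL_n = P_n ⊠ P_2 equals 9. -/

import Mathlib

/-- A graceful `k`-coloring of `G`: a proper vertex coloring with colors in
`{1, ..., k}` whose induced edge coloring `f*(uv) = |f u - f v|` is a proper
edge coloring. -/
def IsGracefulColoring {V : Type*} (G : SimpleGraph V) (k : ℕ) (f : V → ℕ) : Prop :=
  (∀ v, 1 ≤ f v ∧ f v ≤ k) ∧
  (∀ ⦃u v⦄, G.Adj u v → f u ≠ f v) ∧
  (∀ ⦃u v w⦄, G.Adj u v → G.Adj u w → v ≠ w →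
    ((f u : ℤ) - f v).natAbs ≠ ((f u : ℤ) - f w).natAbs)

/-- The graceful chromatic number: the least `k` admitting a graceful `k`-coloring. -/
noncomputable def gracefulChromaticNumber {V : Type*} (G : SimpleGraph V) : ℕ :=
  sInf {k | ∃ f : V → ℕ, IsGracefulColoring G k f}

/-- The diagonal ladder `DL_n` (the strong product `P_n ⊠ P_2`): the closed ladder
together with both diagonals `x_i y_{i+1}` and `y_i x_{i+1}`. -/
def diagonalLadder (n : ℕ) : SimpleGraph (Fin 2 × Fin n) :=
  SimpleGraph.fromRel (fun a b =>
    (a.1 = b.1 ∧ a.2.val + 1 = b.2.val) ∨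
    (a.1 ≠ b.1 ∧ (a.2 = b.2 ∨ a.2.val + 1 = b.2.val ∨ b.2.val + 1 = a.2.val)))

/-!
For the upper bound, color the columns periodically by `(1, 2), (6, 7), (3, 4), (8, 9)`. Even
columns receive colors at most `4` and odd columns colors at least `6`, so the neighbors of a
vertex outside its column all lie on the same side of its color, at distance at least `2`, while
its partner in the column is at distance `1`. As colors do not repeat within three consecutive
columns, the distances to the neighbors are distinct.

For the lower bound, a vertex of degree `5` must have a color from which its neighbors' colors
are at five distinct distances. Among `1, ..., 8` this excludes `4` and `5` outside the first
and last columns. Outside the two columns at either end it then excludes `2`, which is equally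
far from `1` and `3`, and likewise `7`. The colors `1, 3, 6, 8` left there afford only three
distances from each, so no color is possible in a column with three others on both sides.
-/

open Finset

section Graceful

variable {V : Type*} {G : SimpleGraph V} {k l d : ℕ} {f : V → ℕ}

theorem isGracefulColoring_iff :
    IsGracefulColoring G k f ↔
      (∀ v, 1 ≤ f v ∧ f v ≤ k) ∧
      (∀ ⦃u v⦄, G.Adj u v → f u ≠ f v) ∧
      ∀ ⦃u v w⦄, G.Adj u v → G.Adj u w → v ≠ w → f v ≠ f w ∧ f v + f w ≠ 2 * f u := by
  have natAbs_sub_ne_iff (a b c : ℕ) :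
      ((a : ℤ) - b).natAbs ≠ ((a : ℤ) - c).natAbs ↔ b ≠ c ∧ b + c ≠ 2 * a := by
    omega
  simp only [IsGracefulColoring, natAbs_sub_ne_iff]

theorem IsGracefulColoring.mono (hf : IsGracefulColoring G k f) (hkl : k ≤ l) :
    IsGracefulColoring G l f :=
  ⟨fun v => ⟨(hf.1 v).1, (hf.1 v).2.trans hkl⟩, hf.2⟩

theorem gracefulChromaticNumber_le (hf : IsGracefulColoring G k f) :
    gracefulChromaticNumber G ≤ k :=
  Nat.sInf_le ⟨f, hf⟩

theorem lt_gracefulChromaticNumber (hf : IsGracefulColoring G l f)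
    (hk : ∀ g, ¬ IsGracefulColoring G k g) : k < gracefulChromaticNumber G := by
  obtain ⟨g, hg⟩ : ∃ g, IsGracefulColoring G (gracefulChromaticNumber G) g :=
    Nat.sInf_mem (s := {k | ∃ f : V → ℕ, IsGracefulColoring G k f}) ⟨l, f, hf⟩
  by_contra! hle
  exact hk g (hg.mono hle)

/-- The colors in `S` from which the other colors in `S` are at `d` or more distinct distances: the
only ones available to a vertex of degree at least `d` if it and its neighbors use colors
from `S`. -/
def richColors (d : ℕ) (S : Finset ℕ) : Finset ℕ :=
  {c ∈ S | d ≤ #((S.erase c).image fun e : ℕ => ((c : ℤ) - e).natAbs)}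

theorem richColors_eq_empty_of_card_le {S : Finset ℕ} (hS : #S ≤ d) : richColors d S = ∅ := by
  refine filter_eq_empty_iff.2 fun c hc => not_le.2 ?_
  calc #((S.erase c).image fun e : ℕ => ((c : ℤ) - e).natAbs)
      ≤ #(S.erase c) := card_image_le
    _ < #S := card_erase_lt_of_mem hc
    _ ≤ d := hS

namespace IsGracefulColoring

variable [G.LocallyFinite]

theorem card_image_natAbs_sub_neighborFinset (hf : IsGracefulColoring G k f) (u : V) :
    #((G.neighborFinset u).image fun v => ((f u : ℤ) - f v).natAbs) = G.degree u := by
  rw [← G.card_neighborFinset_eq_degree]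
  refine card_image_of_injOn fun v hv w hw hvw => ?_
  rw [mem_coe, G.mem_neighborFinset] at hv hw
  by_contra hne
  exact hf.2.2 hv hw hne hvw

theorem mem_richColors (hf : IsGracefulColoring G k f) {S : Finset ℕ} {u : V}
    (hd : d ≤ G.degree u) (hu : f u ∈ S) (hS : ∀ v, G.Adj u v → f v ∈ S) :
    f u ∈ richColors d S := by
  refine mem_filter.2 ⟨hu, hd.trans ?_⟩
  rw [← hf.card_image_natAbs_sub_neighborFinset u]
  refine card_le_card (image_subset_iff.2 fun v hv => ?_)
  have huv : G.Adj u v := (G.mem_neighborFinset u v).1 hv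
  exact mem_image_of_mem (fun e : ℕ => ((f u : ℤ) - e).natAbs)
    (mem_erase.2 ⟨(hf.2.1 huv).symm, hS v huv⟩)

theorem mem_iterate_richColors (hf : IsGracefulColoring G k f) (m : ℕ) (u : V)
    (hd : ∀ v (p : G.Walk u v), p.length < m → d ≤ G.degree v) :
    f u ∈ (richColors d)^[m] (Icc 1 k) := by
  induction m generalizing u with
  | zero => exact mem_Icc.2 (hf.1 u)
  | succ m ih =>
    rw [Function.iterate_succ_apply']
    refine hf.mem_richColors (hd u .nil m.succ_pos) ?_ fun v huv => ?_
    · exact ih u fun w p hp => hd w p (hp.trans m.lt_succ_self)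
    · exact ih v fun w p hp => hd w (.cons huv p) (Nat.succ_lt_succ hp)

end IsGracefulColoring

end Graceful

section DiagonalLadder

variable {n : ℕ} {u v w : Fin 2 × Fin n}

theorem diagonalLadder_adj :
    (diagonalLadder n).Adj u v ↔
      u ≠ v ∧ u.2.val ≤ v.2.val + 1 ∧ v.2.val ≤ u.2.val + 1 := by
  simp only [diagonalLadder, SimpleGraph.fromRel_adj, ne_eq, Prod.ext_iff, Fin.ext_iff]
  omega

instance : DecidableRel (diagonalLadder n).Adj :=
  fun _ _ => decidable_of_iff' _ diagonalLadder_adj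

theorem column_le_of_diagonalLadder_walk (p : (diagonalLadder n).Walk u v) :
    u.2.val ≤ v.2.val + p.length ∧ v.2.val ≤ u.2.val + p.length := by
  induction p with
  | nil => simp
  | cons h p ih =>
    have := diagonalLadder_adj.1 h
    rw [SimpleGraph.Walk.length_cons]
    omega

theorem degree_diagonalLadder (hpos : 0 < u.2.val) (hlt : u.2.val + 1 < n) :
    (diagonalLadder n).degree u = 5 := by
  let C : Finset (Fin n) := Icc ⟨u.2 - 1, by omega⟩ ⟨u.2 + 1, hlt⟩
  have mem_C (j : Fin n) : j ∈ C ↔ u.2.val ≤ j + 1 ∧ j.val ≤ u.2 + 1 := by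
    simp only [C, mem_Icc, Fin.le_def]
    omega
  have card_C : #C = 3 := by
    rw [Fin.card_Icc]
    dsimp only
    omega
  have neighborFinset_eq : (diagonalLadder n).neighborFinset u = (univ ×ˢ C).erase u := by
    ext v
    rw [SimpleGraph.mem_neighborFinset, diagonalLadder_adj, mem_erase, mem_product, mem_C, ne_comm]
    simp
  have u_mem : u ∈ univ ×ˢ C := by simp [mem_C]
  rw [← SimpleGraph.card_neighborFinset_eq_degree, neighborFinset_eq, card_erase_of_mem u_mem,
    card_product, card_C, card_univ, Fintype.card_fin]

theorem not_isGracefulColoring_diagonalLadder_eight (hn : 7 ≤ n) (f : Fin 2 × Fin n → ℕ) :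
    ¬ IsGracefulColoring (diagonalLadder n) 8 f := by
  intro hf
  let u : Fin 2 × Fin n := (0, ⟨3, by omega⟩)
  have hu : f u ∈ (richColors 5)^[3] (Icc 1 8) := by
    refine hf.mem_iterate_richColors 3 u fun v p hp => ?_
    have : 3 ≤ v.2.val + p.length ∧ v.2.val ≤ 3 + p.length := column_le_of_diagonalLadder_walk p
    exact (degree_diagonalLadder (by omega) (by omega)).ge
  have without_four_five : richColors 5 (Icc 1 8) = {1, 2, 3, 6, 7, 8} := by decide
  have without_two_seven : richColors 5 {1, 2, 3, 6, 7, 8} = {1, 3, 6, 8} := by decide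
  have too_few_colors : richColors 5 {1, 3, 6, 8} = ∅ :=
    richColors_eq_empty_of_card_le (by decide)
  change f u ∈ richColors 5 (richColors 5 (richColors 5 (Icc 1 8))) at hu
  rw [without_four_five, without_two_seven, too_few_colors] at hu
  exact notMem_empty _ hu

/-- The coloring of the ladder whose successive columns are colored `(1, 2)`, `(6, 7)`, `(3, 4)`,
`(8, 9)`, with period four. -/
def periodicColor (v : Fin 2 × Fin n) : ℕ :=
  1 + 5 * (v.2.val % 2) + 2 * (v.2.val / 2 % 2) + v.1.val

theorem periodicColor_mem_Icc (v : Fin 2 × Fin n) : periodicColor v ∈ Icc 1 9 := by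
  simp only [periodicColor, mem_Icc]
  omega

theorem periodicColor_eq_iff :
    periodicColor u = periodicColor v ↔ u.1 = v.1 ∧ u.2.val ≡ v.2 [MOD 4] := by
  have digits_eq_iff {a b c a' b' c' : ℕ} (hb : b < 2) (hc : c < 2) (hb' : b' < 2) (hc' : c' < 2) :
      1 + 5 * a + 2 * b + c = 1 + 5 * a' + 2 * b' + c' ↔ a = a' ∧ b = b' ∧ c = c' := by
    interval_cases b <;> interval_cases b' <;> omega
  rw [periodicColor, periodicColor, digits_eq_iff (by omega) u.1.isLt (by omega) v.1.isLt,
    Fin.ext_iff, Nat.ModEq]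
  omega

theorem periodicColor_ne (huv : u ≠ v) (hle : u.2.val ≤ v.2 + 2) (hge : v.2.val ≤ u.2 + 2) :
    periodicColor u ≠ periodicColor v := by
  rw [ne_eq, periodicColor_eq_iff, Nat.ModEq]
  rintro ⟨row_eq, column_mod_eq⟩
  exact huv (Prod.ext row_eq (Fin.ext (by omega)))

theorem periodicColor_le_add_one (huv : u.2 = v.2) : periodicColor u ≤ periodicColor v + 1 := by
  simp only [periodicColor, huv]
  omega

theorem periodicColor_add_two_le (hu : Even u.2.val) (hv : Odd v.2.val) :
    periodicColor u + 2 ≤ periodicColor v := by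
  rw [Nat.even_iff] at hu
  rw [Nat.odd_iff] at hv
  simp only [periodicColor]
  omega

theorem column_eq_or_odd_add_of_adj (huv : (diagonalLadder n).Adj u v) :
    u.2 = v.2 ∨ Odd (u.2.val + v.2.val) := by
  have := diagonalLadder_adj.1 huv
  rw [Fin.ext_iff, Nat.odd_iff]
  omega

theorem column_ne_or_column_ne (huv : u ≠ v) (huw : u ≠ w) (hvw : v ≠ w) :
    u.2 ≠ v.2 ∨ u.2 ≠ w.2 := by
  simp only [ne_eq, Prod.ext_iff, Fin.ext_iff] at huv huw hvw ⊢
  omega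

theorem periodicColor_add_ne_two_mul (huv : (diagonalLadder n).Adj u v)
    (huw : (diagonalLadder n).Adj u w) (hvw : v ≠ w) :
    periodicColor v + periodicColor w ≠ 2 * periodicColor u := by
  have not_both := column_ne_or_column_ne huv.ne huw.ne hvw
  rcases Nat.even_or_odd u.2.val with hu | hu
  · have above {x} (hux : (diagonalLadder n).Adj u x) :
        u.2 = x.2 ∧ periodicColor u ≤ periodicColor x + 1 ∨
          periodicColor u + 2 ≤ periodicColor x :=
      (column_eq_or_odd_add_of_adj hux).imp (fun h => ⟨h, periodicColor_le_add_one h⟩)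
        fun h => periodicColor_add_two_le hu ((Nat.odd_add'.1 h).2 hu)
    have above_v := above huv
    have above_w := above huw
    omega
  · have below {x} (hux : (diagonalLadder n).Adj u x) :
        u.2 = x.2 ∧ periodicColor x ≤ periodicColor u + 1 ∨
          periodicColor x + 2 ≤ periodicColor u :=
      (column_eq_or_odd_add_of_adj hux).imp (fun h => ⟨h, periodicColor_le_add_one h.symm⟩)
        fun h => periodicColor_add_two_le ((Nat.odd_add.1 h).1 hu) hu
    have below_v := below huv
    have below_w := below huw
    omega

theorem isGracefulColoring_periodicColor :
    IsGracefulColoring (diagonalLadder n) 9 periodicColor := by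
  refine isGracefulColoring_iff.2 ⟨fun v => mem_Icc.1 (periodicColor_mem_Icc v),
    fun u v huv => ?_, fun u v w huv huw hvw => ⟨?_, periodicColor_add_ne_two_mul huv huw hvw⟩⟩
  · obtain ⟨hne, hle, hge⟩ := diagonalLadder_adj.1 huv
    exact periodicColor_ne hne (hle.trans (Nat.le_succ _)) (hge.trans (Nat.le_succ _))
  · have near_v := diagonalLadder_adj.1 huv
    have near_w := diagonalLadder_adj.1 huw
    exact periodicColor_ne hvw (by omega) (by omega)

end DiagonalLadder

theorem gracefulChromaticNumber_diagonalLadder (n : ℕ) (hn : 7 ≤ n) :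
    gracefulChromaticNumber (diagonalLadder n) = 9 :=
  le_antisymm (gracefulChromaticNumber_le isGracefulColoring_periodicColor)
    (lt_gracefulChromaticNumber isGracefulColoring_periodicColor
      (not_isGracefulColoring_diagonalLadder_eight hn))
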